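/- Let T be a reasonable decision tree for a training set (E, λ) whose root is an inner node. Then no inner node of T other than the root has both the same feature and the same threshold as the root. Consequently, if P is a decision tree obtained from T by a sequence of subtree raising operations and the root of P is an inner node with the same feature and threshold as the root of T, then the root of T is not pruned by the sequence, and the left and right subtrees of P are obtained from the left and right subtrees of T, respectively, by subtree raising operations. -/

import Mathlib

/-- The two class labels. -/
inductive Label where
  | blue
  | red
deriving DecidableEq

/-- A decision tree over examples `ι → ℝ` with classes `{blue, red}`:
every inner node carries a feature and a threshold, every leaf a class label.
An example goes to the left child if its value in the node's feature is at most
the threshold, and to the right child otherwise. -/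
inductive DTree (ι : Type) where
  | leaf (c : Label)
  | node (feat : ι) (thr : ℝ) (left right : DTree ι)

namespace DTree

variable {ι : Type}

/-- The class that a decision tree assigns to an example. -/
noncomputable def classify : DTree ι → (ι → ℝ) → Label
  | .leaf c, _ => c
  | .node f t l r, e => if e f ≤ t then l.classify e else r.classify e

/-- The routing path of an example (`false` = left child, `true` = right child);
it is the position of the leaf of the example. -/
noncomputable def route : DTree ι → (ι → ℝ) → List Bool
  | .leaf _, _ => []
  | .node f t l r, e => if e f ≤ t then false :: l.route e else true :: r.route e

/-- The subtree rooted at a position (`none` if the position is not a node). -/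
def subtreeAt : DTree ι → List Bool → Option (DTree ι)
  | T, [] => some T
  | .leaf _, _ :: _ => none
  | .node _ _ l r, b :: p => (if b then r else l).subtreeAt p

/-- Replace the subtree at a given position by another tree. -/
def replaceAt : DTree ι → List Bool → DTree ι → DTree ι
  | _, [], T' => T'
  | .leaf c, _ :: _, _ => .leaf c
  | .node f t l r, b :: p, T' =>
      if b then .node f t l (r.replaceAt p T') else .node f t (l.replaceAt p T') r

/-- The number of inner nodes of a decision tree. -/
def innerCount : DTree ι → ℕ
  | .leaf _ => 0
  | .node _ _ l r => 1 + l.innerCount + r.innerCount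

/-- The position `p` is an inner node of `T`. -/
def IsInnerPos (T : DTree ι) (p : List Bool) : Prop :=
  ∃ f t l r, T.subtreeAt p = some (.node f t l r)

/-- The position `p` is a node of `T`. -/
def IsNodePos (T : DTree ι) (p : List Bool) : Prop :=
  (T.subtreeAt p).isSome

/-- The feature and threshold of the inner node at position `p`. -/
def cutAt (T : DTree ι) (p : List Bool) : Option (ι × ℝ) :=
  match T.subtreeAt p with
  | some (.node f t _ _) => some (f, t)
  | _ => none

/-- The subtree raising operation at position `q` keeping the child in direction `b`:
the subtree rooted at `q` is replaced by the subtree rooted at its `b`-child; it prunes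
the node at `q` together with all inner nodes of the subtree rooted at the other child. -/
def raiseAt (T : DTree ι) (q : List Bool) (b : Bool) : DTree ι :=
  match T.subtreeAt q with
  | some (.node _ _ l r) => T.replaceAt q (if b then r else l)
  | _ => T

end DTree

/-- `E[T,p]`: the examples of `E` whose routing through `T` passes the position `p`. -/
noncomputable def reach {ι : Type} (E : Finset (ι → ℝ)) (T : DTree ι) (p : List Bool) :
    Finset (ι → ℝ) :=
  E.filter fun e => p <+: T.route e

/-- The number of errors of `T` on the training set `(E, lab)`. -/
noncomputable def errCount {ι : Type} (T : DTree ι) (E : Finset (ι → ℝ))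
    (lab : (ι → ℝ) → Label) : ℕ :=
  (E.filter fun e => T.classify e ≠ lab e).card

/-- A most frequent label of the labeled set `(E, lab)` (blue in case of a tie). -/
def majorityLabel {ι : Type} (E : Finset (ι → ℝ)) (lab : (ι → ℝ) → Label) : Label :=
  if (E.filter fun e => lab e = Label.red).card ≤ (E.filter fun e => lab e = Label.blue).card
  then Label.blue else Label.red

/-- One subtree replacement operation: some inner node of `T` is replaced by a leaf
labeled with a most frequent label of the examples reaching it. -/
def ReplStep {ι : Type} (E : Finset (ι → ℝ)) (lab : (ι → ℝ) → Label)
    (T T' : DTree ι) : Prop :=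
  ∃ p, T.IsInnerPos p ∧
    T' = T.replaceAt p (.leaf (majorityLabel (reach E T p) lab))

/-- `T` is a reasonable decision tree for `(E, lab)`: every node is reached by some
example and every leaf carries a most frequent label of the examples reaching it. -/
def Reasonable {ι : Type} (E : Finset (ι → ℝ)) (lab : (ι → ℝ) → Label)
    (T : DTree ι) : Prop :=
  (∀ p, T.IsNodePos p → (reach E T p).Nonempty) ∧
  (∀ p c, T.subtreeAt p = some (.leaf c) → ∀ c' : Label,
    ((reach E T p).filter fun e => lab e = c').card ≤
      ((reach E T p).filter fun e => lab e = c).card)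

/-- Apply a sequence of raising operations (given by positions and kept directions). -/
def applySeq {ι : Type} : DTree ι → List (List Bool × Bool) → DTree ι
  | T, [] => T
  | T, (q, b) :: rest => applySeq (T.raiseAt q b) rest

/-- Each raising operation of the sequence is applied at an inner node. -/
def ValidSeq {ι : Type} : DTree ι → List (List Bool × Bool) → Prop
  | _, [] => True
  | T, (q, b) :: rest => T.IsInnerPos q ∧ ValidSeq (T.raiseAt q b) rest

/-- The total number of inner nodes pruned by a sequence of raising operations. -/
def seqPruned {ι : Type} : DTree ι → List (List Bool × Bool) → ℕ
  | _, [] => 0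
  | T, (q, b) :: rest =>
      (match T.subtreeAt q with
        | some (.node _ _ l r) => 1 + DTree.innerCount (if b then l else r)
        | _ => 0) + seqPruned (T.raiseAt q b) rest

/-- `T'` is obtained from `T` by a (possibly empty) sequence of subtree raising
operations. -/
def RaisedFrom {ι : Type} (T T' : DTree ι) : Prop :=
  ∃ steps, ValidSeq T steps ∧ applySeq T steps = T'

/-- `T'` is obtained from `T` by a sequence of subtree raising operations pruning
exactly `m` inner nodes in total. -/
def RaisedFromPruning {ι : Type} (T : DTree ι) (m : ℕ) (T' : DTree ι) : Prop :=
  ∃ steps, ValidSeq T steps ∧ seqPruned T steps = m ∧ applySeq T steps = T'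

/-- Tracking the position of a node through one raising operation: nodes strictly
below the raised node on the discarded side, and the raised node itself, are pruned
(`none`); all other nodes survive at a possibly shifted position. -/
def stepMap (q : List Bool) (b : Bool) (p : List Bool) : Option (List Bool) :=
  if q <+: p then
    if q ++ [b] <+: p then some (q ++ p.drop (q.length + 1)) else none
  else some p

/-- Tracking the position of a node through a sequence of raising operations. -/
def seqMap : List (List Bool × Bool) → List Bool → Option (List Bool)
  | [], p => some p
  | (q, b) :: rest, p => (stepMap q b p).bind (seqMap rest)

/-- The number of errors of `T` on a multiset of labeled examples. -/
noncomputable def errCountM {ι : Type} (T : DTree ι) (E : Multiset ((ι → ℝ) × Label)) : ℕ :=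
  (E.filter fun q => T.classify q.1 ≠ q.2).card

namespace DTree

variable {ι : Type}

/-- No inner node of `T` has the cut `c` (feature and threshold). -/
def AvoidsCut (T : DTree ι) (c : ι × ℝ) : Prop :=
  ∀ p, T.cutAt p ≠ some c

theorem cutAt_node_cons (f : ι) (t : ℝ) (l r : DTree ι) (b : Bool) (p : List Bool) :
    (node f t l r).cutAt (b :: p) = (if b then r else l).cutAt p := rfl

theorem avoidsCut_node {f : ι} {t : ℝ} {l r : DTree ι} {c : ι × ℝ} :
    (node f t l r).AvoidsCut c ↔ (f, t) ≠ c ∧ l.AvoidsCut c ∧ r.AvoidsCut c := by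
  constructor
  · intro h
    exact ⟨fun hc => h [] (congrArg some hc), fun p => h (false :: p), fun p => h (true :: p)⟩
  · rintro ⟨hc, hl, hr⟩ (_ | ⟨_ | _, p⟩)
    · exact fun h => hc (Option.some.inj h)
    · exact hl p
    · exact hr p

theorem raiseAt_node_nil (f : ι) (t : ℝ) (l r : DTree ι) (b : Bool) :
    (node f t l r).raiseAt [] b = if b then r else l := by
  simp [raiseAt, subtreeAt, replaceAt]

theorem raiseAt_node_false_cons (f : ι) (t : ℝ) (l r : DTree ι) (q : List Bool) (b : Bool) :
    (node f t l r).raiseAt (false :: q) b = node f t (l.raiseAt q b) r := by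
  rcases h : l.subtreeAt q with _ | _ | _ <;> simp [raiseAt, subtreeAt, replaceAt, h]

theorem raiseAt_node_true_cons (f : ι) (t : ℝ) (l r : DTree ι) (q : List Bool) (b : Bool) :
    (node f t l r).raiseAt (true :: q) b = node f t l (r.raiseAt q b) := by
  rcases h : r.subtreeAt q with _ | _ | _ <;> simp [raiseAt, subtreeAt, replaceAt, h]

theorem raiseAt_leaf (c : Label) (q : List Bool) (b : Bool) :
    (leaf c : DTree ι).raiseAt q b = leaf c := by
  cases q <;> rfl

theorem AvoidsCut.raiseAt {T : DTree ι} {c : ι × ℝ} (h : T.AvoidsCut c) (q : List Bool)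
    (b : Bool) : (T.raiseAt q b).AvoidsCut c := by
  induction T generalizing q with
  | leaf _ => rwa [raiseAt_leaf]
  | node f t l r ihl ihr =>
    obtain ⟨hc, hl, hr⟩ := avoidsCut_node.1 h
    rcases q with _ | ⟨_ | _, q⟩
    · rw [raiseAt_node_nil]
      split_ifs <;> assumption
    · rw [raiseAt_node_false_cons]
      exact avoidsCut_node.2 ⟨hc, ihl hl q, hr⟩
    · rw [raiseAt_node_true_cons]
      exact avoidsCut_node.2 ⟨hc, hl, ihr hr q⟩

theorem AvoidsCut.applySeq {T : DTree ι} {c : ι × ℝ} (h : T.AvoidsCut c)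
    (steps : List (List Bool × Bool)) : (applySeq T steps).AvoidsCut c := by
  induction steps generalizing T with
  | nil => exact h
  | cons s steps ih => exact ih (h.raiseAt s.1 s.2)

/-- An example passing from the node at `p` to its `b`-child satisfies the test of that node
exactly if `b` is the left direction. -/
theorem le_thr_iff_of_prefix_route {T : DTree ι} {p : List Bool} {f : ι} {t : ℝ} {b : Bool}
    {e : ι → ℝ} (hcut : T.cutAt p = some (f, t)) (hpre : p ++ [b] <+: T.route e) :
    e f ≤ t ↔ b = false := by
  induction T generalizing p with
  | leaf c => cases p <;> simp [cutAt, subtreeAt] at hcut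
  | node g s l r ihl ihr =>
    rcases p with _ | ⟨a, p⟩
    · obtain ⟨rfl, rfl⟩ : g = f ∧ s = t := by simpa [cutAt, subtreeAt] using hcut
      by_cases h : e g ≤ s <;> simp_all [route]
    · rw [cutAt_node_cons] at hcut
      by_cases h : e g ≤ s
      · obtain ⟨rfl, htail⟩ : a = false ∧ p ++ [b] <+: l.route e := by
          simpa [route, h, List.cons_prefix_cons] using hpre
        exact ihl hcut htail
      · obtain ⟨rfl, htail⟩ : a = true ∧ p ++ [b] <+: r.route e := by
          simpa [route, h, List.cons_prefix_cons] using hpre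
        exact ihr hcut htail

theorem isNodePos_child_of_cutAt {T : DTree ι} {p : List Bool} {c : ι × ℝ}
    (hcut : T.cutAt p = some c) (b : Bool) : T.IsNodePos (p ++ [b]) := by
  induction T generalizing p with
  | leaf _ => cases p <;> simp [cutAt, subtreeAt] at hcut
  | node f t l r ihl ihr =>
    rcases p with _ | ⟨_ | _, p⟩
    · cases b <;> simp [IsNodePos, subtreeAt]
    · exact ihl hcut
    · exact ihr hcut

end DTree

section Raising

variable {ι : Type}

theorem RaisedFrom.refl (T : DTree ι) : RaisedFrom T T :=
  ⟨[], trivial, rfl⟩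

theorem RaisedFrom.head {T T' : DTree ι} {q : List Bool} {b : Bool} (hq : T.IsInnerPos q)
    (h : RaisedFrom (T.raiseAt q b) T') : RaisedFrom T T' := by
  obtain ⟨steps, hvalid, happly⟩ := h
  exact ⟨(q, b) :: steps, ⟨hq, hvalid⟩, happly⟩

theorem stepMap_cons_nil (a : Bool) (q : List Bool) (b : Bool) :
    stepMap (a :: q) b [] = some [] := by
  simp [stepMap]

/-- If the root cut occurs in neither subtree, a raising sequence that ends in a tree with the
same root cut keeps the root and acts on the two subtrees separately. -/
theorem seqMap_nil_and_raisedFrom_of_avoidsCut {f : ι} {t : ℝ} {l r l' r' : DTree ι}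
    (hl : l.AvoidsCut (f, t)) (hr : r.AvoidsCut (f, t)) {steps : List (List Bool × Bool)}
    (hvalid : ValidSeq (DTree.node f t l r) steps)
    (happly : applySeq (DTree.node f t l r) steps = DTree.node f t l' r') :
    seqMap steps [] = some [] ∧ RaisedFrom l l' ∧ RaisedFrom r r' := by
  induction steps generalizing l r with
  | nil =>
    obtain ⟨rfl, rfl⟩ : l = l' ∧ r = r' := by simpa [applySeq] using happly
    exact ⟨rfl, .refl l, .refl r⟩
  | cons s steps ih =>
    obtain ⟨q, b⟩ := s
    obtain ⟨hq, hvalid⟩ := hvalid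
    rw [applySeq] at happly
    rcases q with _ | ⟨_ | _, q⟩
    · have havoid : (if b then r else l).AvoidsCut (f, t) := by split_ifs <;> assumption
      rw [DTree.raiseAt_node_nil] at happly
      have hroot := havoid.applySeq steps
      rw [happly] at hroot
      exact absurd rfl (DTree.avoidsCut_node.1 hroot).1
    · rw [DTree.raiseAt_node_false_cons] at happly hvalid
      obtain ⟨hmap, hl', hr'⟩ := ih (hl.raiseAt q b) hr hvalid happly
      exact ⟨by rwa [seqMap, stepMap_cons_nil], hl'.head hq, hr'⟩
    · rw [DTree.raiseAt_node_true_cons] at happly hvalid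
      obtain ⟨hmap, hl', hr'⟩ := ih hl (hr.raiseAt q b) hvalid happly
      exact ⟨by rwa [seqMap, stepMap_cons_nil], hl', hr'.head hq⟩

theorem Reasonable.cutAt_ne_root {E : Finset (ι → ℝ)} {lab : (ι → ℝ) → Label} {f : ι} {t : ℝ}
    {l r : DTree ι} (h : Reasonable E lab (DTree.node f t l r)) {p : List Bool} (hp : p ≠ []) :
    (DTree.node f t l r).cutAt p ≠ some (f, t) := by
  intro hcut
  obtain ⟨a, p, rfl⟩ := List.exists_cons_of_ne_nil hp
  obtain ⟨e, he⟩ := h.1 _ (DTree.isNodePos_child_of_cutAt hcut (!a))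
  have hpre := (Finset.mem_filter.1 he).2
  have hroot : [] ++ [a] <+: (DTree.node f t l r).route e :=
    List.IsPrefix.trans ⟨p ++ [!a], rfl⟩ hpre
  have hdir := (DTree.le_thr_iff_of_prefix_route (p := []) rfl hroot).symm.trans
    (DTree.le_thr_iff_of_prefix_route hcut hpre)
  cases a <;> simp at hdir

end Raising

/-- Let `T = node f t l r` be a reasonable decision tree for
`(E, lab)` whose root is an inner node. Then no inner node of `T` other than the
root has both the same feature and the same threshold as the root. Consequently,
if `P` is obtained from `T` by a sequence of subtree raising operations and the
root of `P` is an inner node with the same feature and threshold as the root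
of `T`, then the root of `T` is not pruned by the sequence, and the left and right
subtrees of `P` are obtained from `l` and `r`, respectively, by subtree raising
operations. -/
theorem stmt7 {d : ℕ} (E : Finset (Fin d → ℝ)) (lab : (Fin d → ℝ) → Label)
    (f : Fin d) (t : ℝ) (l r : DTree (Fin d))
    (hreas : Reasonable E lab (DTree.node f t l r)) :
    (∀ p : List Bool, p ≠ [] → (DTree.node f t l r).cutAt p ≠ some (f, t))
    ∧ (∀ steps : List (List Bool × Bool), ValidSeq (DTree.node f t l r) steps →
        ∀ l' r' : DTree (Fin d),
          applySeq (DTree.node f t l r) steps = DTree.node f t l' r' →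
          seqMap steps [] = some [] ∧ RaisedFrom l l' ∧ RaisedFrom r r') := by
  refine ⟨fun p hp => hreas.cutAt_ne_root hp, fun steps hvalid l' r' happly => ?_⟩
  exact seqMap_nil_and_raisedFrom_of_avoidsCut
    (fun p => hreas.cutAt_ne_root (p := false :: p) (List.cons_ne_nil false p))
    (fun p => hreas.cutAt_ne_root (p := true :: p) (List.cons_ne_nil true p)) hvalid happly
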